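/- arXiv:2405.04703 — 2 statements merged into one kernel-verified Lean document; each statement's English description precedes it below -/
import Mathlib

section
/- For a positive integer b, the symmetrical antitree AT(1,b,b,1) (which has diameter 3) is Bonnet-Myers sharp if and only if b=3; that is, AT(1,3,3,1) is the only symmetrical antitree with a_1=1 of diameter 3 that is Bonnet-Myers sharp. -/
open scoped Classical
open Finset

noncomputable section

/-- The degree of a vertex `x` in the graph `G`. -/
def deg {V : Type*} [Fintype V] (G : SimpleGraph V) (x : V) : ℕ :=
  (Finset.univ.filter (fun y => G.Adj x y)).card

/-- The diameter of `G`: the maximum of the combinatorial distance over all pairs of vertices. -/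
def diam {V : Type*} [Fintype V] (G : SimpleGraph V) : ℕ :=
  Finset.univ.sup (fun xy : V × V => G.dist xy.1 xy.2)

/-- The probability measure `μ_x^p` of the lazy simple random walk at `x` with idleness `p`. -/
def mu {V : Type*} [Fintype V] (G : SimpleGraph V) (p : ℝ) (x : V) : V → ℝ :=
  fun z => if z = x then p else if G.Adj x z then (1 - p) / (deg G x : ℝ) else 0

/-- The Wasserstein distance `W₁(μ₁, μ₂)` with respect to the combinatorial distance of `G`:
the infimum of the total transport cost over all transport plans from `μ₁` to `μ₂`. -/
def W1 {V : Type*} [Fintype V] (G : SimpleGraph V) (μ₁ μ₂ : V → ℝ) : ℝ :=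
  sInf {c : ℝ | ∃ π : V → V → ℝ,
    (∀ x y, 0 ≤ π x y ∧ π x y ≤ 1) ∧
    (∀ x, ∑ y, π x y = μ₁ x) ∧
    (∀ y, ∑ x, π x y = μ₂ y) ∧
    c = ∑ x, ∑ y, (G.dist x y : ℝ) * π x y}

/-- The `p`-Ollivier-Ricci curvature `κ_p(x,y) = 1 - W₁(μ_x^p, μ_y^p)`. -/
def kappa {V : Type*} [Fintype V] (G : SimpleGraph V) (p : ℝ) (x y : V) : ℝ :=
  1 - W1 G (mu G p x) (mu G p y)

/-- The Lin-Lu-Yau curvature `κ_LLY(x,y) = lim_{p→1} κ_p(x,y)/(1-p)`. -/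
def kappaLLY {V : Type*} [Fintype V] (G : SimpleGraph V) (x y : V) : ℝ :=
  Filter.limUnder (nhdsWithin 1 (Set.Iio 1)) (fun p => kappa G p x y / (1 - p))

/-- `G` is Bonnet-Myers sharp if the infimum of `κ_LLY` over the edges equals `2/diam(G)`. -/
def BMSharp {V : Type*} [Fintype V] (G : SimpleGraph V) : Prop :=
  sInf {r : ℝ | ∃ x y, G.Adj x y ∧ r = kappaLLY G x y} = 2 / (diam G : ℝ)

/-- `G` is obtained from the complete graph on its vertex set by deleting a matching
(a set of pairwise disjoint edges, encoded as a symmetric irreflexive relation in which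
every vertex has at most one partner). -/
def IsMatchingDeletionOfComplete {V : Type*} (G : SimpleGraph V) : Prop :=
  ∃ M : V → V → Prop, Symmetric M ∧ (∀ x, ¬ M x x) ∧
    (∀ x y z, M x y → M x z → y = z) ∧
    (∀ x y, G.Adj x y ↔ x ≠ y ∧ ¬ M x y)

/-- The graph `G(a,b)` on `2a+b` vertices `u_1, …, u_{2a}, v_1, …, v_b` (encoded as
`Fin (2a+b)`, with `u_i` the index `i-1` and `v_j` the index `2a+j-1`), in which two distinct
vertices are adjacent unless they form a pair `{u_{2i-1}, u_{2i}}`, i.e. `G(a,b)` is the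
complete graph `K_{2a+b}` with a matching of size `a` deleted. -/
def Gab (a b : ℕ) : SimpleGraph (Fin (2*a+b)) where
  Adj x y := x ≠ y ∧ ¬((x : ℕ) < 2*a ∧ (y : ℕ) < 2*a ∧ (x : ℕ)/2 = (y : ℕ)/2)
  symm := by
    constructor
    intro x y h
    exact ⟨h.1.symm, fun hc => h.2 ⟨hc.2.1, hc.1, hc.2.2.symm⟩⟩
  loopless := by constructor; intro x h; exact h.1 rfl

/-- The antitree `AT(a_1, …, a_N)` on the disjoint union of sets `V_1, …, V_N` with
`|V_k| = a_k` (0-indexed here: `V_k` is `Fin (a k)` for `k : Fin N`): two distinct vertices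
are adjacent iff they lie in the same set or in consecutive sets. -/
def antitree (N : ℕ) (a : Fin N → ℕ) : SimpleGraph (Σ k : Fin N, Fin (a k)) where
  Adj x y := x ≠ y ∧
    ((x.1 : ℕ) = (y.1 : ℕ) ∨ (x.1 : ℕ) + 1 = (y.1 : ℕ) ∨ (y.1 : ℕ) + 1 = (x.1 : ℕ))
  symm := by
    constructor
    intro x y h
    refine ⟨h.1.symm, ?_⟩
    rcases h.2 with h2 | h2 | h2
    · exact Or.inl h2.symm
    · exact Or.inr (Or.inr h2)
    · exact Or.inr (Or.inl h2)
  loopless := by constructor; intro x h; exact h.1 rfl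

/-!
A transport plan that moves mass only along pairs on which a 1-Lipschitz function `f` grows by the
full distance is optimal by Kantorovich duality. If such plans exist between the walk measures of
adjacent `x`, `y` with `f y - f x = 1`, then `κ_LLY(x, y) = Δf(x) - Δf(y)`, where `Δ` is the
normalised Laplacian.

In `AT(1, b, b, 1)` take `f` to be the level. From a vertex to a neighbour one level up, the walk
measures differ by moving a point mass along the edge and one layer (`V_1` to `V_2` on an outer
edge, `V_0` to `V_3` on a middle edge) to a higher layer of the same size. This gives the
curvatures `(b + 1) / (2b)` on outer edges and `(b - 1) / b` on middle edges, while an edge inside a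
layer has curvature `1 + 1 / d_x > 1`. Both `(b + 1) / (2b) ≥ 2 / 3` and `(b - 1) / b ≥ 2 / 3` hold
only for `b = 3`, where both are equalities.
-/

section Transport

variable {V : Type*} [Fintype V] {G : SimpleGraph V} {f μ ν μ' ν' : V → ℝ}

/-- `Calibrates G f μ ν`: some transport plan `π` from `μ` to `ν` moves mass only along pairs on
which `f` grows by the full distance. If `f` is 1-Lipschitz, complementary slackness makes such a
plan optimal, with `f` as Kantorovich potential. -/
def Calibrates (G : SimpleGraph V) (f μ ν : V → ℝ) : Prop :=
  ∃ π : V → V → ℝ, (∀ x y, 0 ≤ π x y) ∧ (∀ x, ∑ y, π x y = μ x) ∧ (∀ y, ∑ x, π x y = ν y) ∧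
    ∀ x y, π x y ≠ 0 → f y - f x = G.dist x y

theorem Calibrates.refl (hμ : 0 ≤ μ) : Calibrates G f μ μ := by
  refine ⟨fun x y => if x = y then μ x else 0, fun x y => ?_, fun x => by simp, fun y => by simp,
    fun x y hxy => ?_⟩
  · dsimp only
    split_ifs
    exacts [hμ x, le_rfl]
  · obtain rfl : x = y := by_contra fun hne => hxy (if_neg hne)
    simp

theorem Calibrates.add (h : Calibrates G f μ ν) (h' : Calibrates G f μ' ν') :
    Calibrates G f (μ + μ') (ν + ν') := by
  obtain ⟨π, hnonneg, hfst, hsnd, htight⟩ := h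
  obtain ⟨π', hnonneg', hfst', hsnd', htight'⟩ := h'
  refine ⟨π + π', fun x y => add_nonneg (hnonneg x y) (hnonneg' x y),
    fun x => by simp [sum_add_distrib, hfst, hfst'],
    fun y => by simp [sum_add_distrib, hsnd, hsnd'], fun x y hxy => ?_⟩
  by_cases hπ : π x y = 0
  · exact htight' x y fun hπ' => hxy (by simp [hπ, hπ'])
  · exact htight x y hπ

theorem Calibrates.of_support (hμ : 0 ≤ μ) (hν : 0 ≤ ν) (hmass : ∑ x, μ x = ∑ x, ν x)
    (htight : ∀ x y, μ x ≠ 0 → ν y ≠ 0 → f y - f x = G.dist x y) : Calibrates G f μ ν := by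
  have eq_zero : ∀ {ρ : V → ℝ}, 0 ≤ ρ → ∑ z, ρ z = 0 → ∀ x, ρ x = 0 := fun hρ h x =>
    (sum_eq_zero_iff_of_nonneg fun z _ => hρ z).1 h x (mem_univ x)
  -- The normalised product plan; if the total mass is `0`, then `x / 0 = 0` makes it the zero plan.
  refine ⟨fun x y => μ x * ν y / ∑ z, ν z,
    fun x y => div_nonneg (mul_nonneg (hμ x) (hν y)) (sum_nonneg fun z _ => hν z),
    fun x => ?_, fun y => ?_, fun x y hxy => htight x y ?_ ?_⟩
  · rw [← sum_div, ← mul_sum]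
    exact mul_div_cancel_of_imp fun h => eq_zero hμ (hmass.trans h) x
  · rw [← sum_div, ← sum_mul, hmass, mul_comm]
    exact mul_div_cancel_of_imp fun h => eq_zero hν h y
  · intro h
    simp [h] at hxy
  · intro h
    simp [h] at hxy

theorem Calibrates.single [DecidableEq V] {x y : V} {m : ℝ} (hm : 0 ≤ m)
    (hxy : f y - f x = G.dist x y) : Calibrates G f (Pi.single x m) (Pi.single y m) := by
  refine .of_support (Pi.single_nonneg.2 hm) (Pi.single_nonneg.2 hm) (by simp)
    fun u v hu hv => ?_
  obtain rfl : u = x := by_contra fun h => hu (by simp [h])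
  obtain rfl : v = y := by_contra fun h => hv (by simp [h])
  exact hxy

theorem sum_sub_mul_plan {π : V → V → ℝ} (hfst : ∀ x, ∑ y, π x y = μ x)
    (hsnd : ∀ y, ∑ x, π x y = ν y) :
    ∑ x, ∑ y, (f y - f x) * π x y = ∑ x, f x * ν x - ∑ x, f x * μ x := by
  simp only [sub_mul, sum_sub_distrib]
  congr 1
  · rw [sum_comm]
    simp only [← mul_sum, hsnd]
  · simp only [← mul_sum, hfst]

theorem Calibrates.W1_eq (h : Calibrates G f μ ν) (hf : ∀ x y, f y - f x ≤ G.dist x y)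
    (hμ : ∀ x, μ x ≤ 1) : W1 G μ ν = ∑ x, f x * ν x - ∑ x, f x * μ x := by
  refine IsLeast.csInf_eq ⟨?_, ?_⟩
  · obtain ⟨π, hnonneg, hfst, hsnd, htight⟩ := h
    have hle_one : ∀ x y, π x y ≤ 1 := fun x y =>
      calc π x y ≤ ∑ z, π x z := single_le_sum (fun z _ => hnonneg x z) (mem_univ y)
        _ ≤ 1 := (hfst x).trans_le (hμ x)
    refine ⟨π, fun x y => ⟨hnonneg x y, hle_one x y⟩, hfst, hsnd, ?_⟩
    rw [← sum_sub_mul_plan hfst hsnd]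
    refine sum_congr rfl fun x _ => sum_congr rfl fun y _ => ?_
    by_cases hπ : π x y = 0
    · simp [hπ]
    · rw [htight x y hπ]
  · rintro c ⟨π, hπ, hfst, hsnd, rfl⟩
    rw [← sum_sub_mul_plan hfst hsnd]
    gcongr with x _ y _
    exacts [(hπ x y).1, hf x y]

theorem W1_comm (μ ν : V → ℝ) : W1 G μ ν = W1 G ν μ := by
  unfold W1
  congr 1
  ext c
  constructor <;>
  · rintro ⟨π, hπ, hfst, hsnd, rfl⟩
    refine ⟨fun x y => π y x, fun x y => hπ y x, hsnd, hfst, ?_⟩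
    rw [sum_comm]
    simp only [G.dist_comm]

end Transport

section Curvature

variable {V : Type*} {G : SimpleGraph V} {f : V → ℝ} {x y : V}

/-- The indicator function of the closed unit ball around `x`. Keeping the centre in the ball makes
the random-walk measures of vertices with the same closed neighbourhood differ only by point
masses. -/
def ballIndicator (G : SimpleGraph V) (x : V) : V → ℝ :=
  fun z => if z = x ∨ G.Adj x z then 1 else 0

theorem ballIndicator_nonneg (G : SimpleGraph V) (x : V) : 0 ≤ ballIndicator G x := fun z => by
  unfold ballIndicator
  split_ifs <;> simp

theorem sub_le_dist_of_adj (hG : G.Connected)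
    (hf : ∀ u v, G.Adj u v → f v - f u ≤ 1) (u v : V) : f v - f u ≤ G.dist u v := by
  have along_walk : ∀ {u v : V} (w : G.Walk u v), f v - f u ≤ w.length := by
    intro u v w
    induction w with
    | nil => simp
    | cons hadj w ih =>
      rw [SimpleGraph.Walk.length_cons]
      push_cast
      linarith [hf _ _ hadj]
  obtain ⟨w, hw⟩ := hG.exists_walk_length_eq_dist u v
  exact hw ▸ along_walk w

variable [Fintype V]

/-- The normalised graph Laplacian `Δf(x) = (1/d_x) ∑_{z ∼ x} (f(z) - f(x))`, through which the
Lin-Lu-Yau curvature is computed. -/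
def walkLaplacian (G : SimpleGraph V) (f : V → ℝ) (x : V) : ℝ :=
  (∑ z with G.Adj x z, (f z - f x)) / deg G x

theorem deg_pos_of_adj (h : G.Adj x y) : 0 < deg G x :=
  card_pos.2 ⟨y, by simpa using h⟩

theorem sum_ballIndicator_mul (g : V → ℝ) :
    ∑ z, ballIndicator G x z * g z = g x + ∑ z with G.Adj x z, g z := by
  have hball : (univ.filter fun z => z = x ∨ G.Adj x z) = insert x (univ.filter (G.Adj x)) := by
    ext z
    simp
  simp only [ballIndicator, ite_mul, one_mul, zero_mul]
  rw [← sum_filter, hball, sum_insert (by simp)]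

theorem sum_ballIndicator : ∑ z, ballIndicator G x z = deg G x + 1 := by
  simpa [deg, add_comm] using sum_ballIndicator_mul (G := G) (x := x) 1

theorem walkLaplacian_eq_sum_ballIndicator :
    walkLaplacian G f x = (∑ z, ballIndicator G x z * (f z - f x)) / deg G x := by
  rw [sum_ballIndicator_mul, sub_self, zero_add, walkLaplacian]

theorem walkLaplacian_single_of_adj [DecidableEq V] (hadj : G.Adj x y) :
    walkLaplacian G (Pi.single y 1) x = 1 / deg G x := by
  simp [walkLaplacian, Pi.single_apply, hadj, hadj.ne]

theorem walkLaplacian_single_self [DecidableEq V] (hx : 0 < deg G x) :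
    walkLaplacian G (Pi.single x 1) x = -1 := by
  have hterm : ∀ z ∈ univ.filter (G.Adj x),
      (Pi.single x 1 : V → ℝ) z - (Pi.single x 1 : V → ℝ) x = -1 := fun z hz => by
    simp [(mem_filter.1 hz).2.ne']
  have hdeg : (deg G x : ℝ) ≠ 0 := Nat.cast_ne_zero.2 hx.ne'
  rw [walkLaplacian, sum_congr rfl hterm, sum_const, nsmul_eq_mul, mul_neg_one, ← deg, neg_div,
    div_self hdeg]

theorem mu_eq_single_add_ballIndicator [DecidableEq V] (p : ℝ) :
    mu G p x = Pi.single x (p - (1 - p) / deg G x) + ((1 - p) / deg G x) • ballIndicator G x := by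
  ext z
  by_cases hz : z = x
  · subst hz
    simp [mu, ballIndicator]
  · simp [mu, ballIndicator, hz]

theorem sum_mul_mu (f : V → ℝ) (hx : 0 < deg G x) (p : ℝ) :
    ∑ z, f z * mu G p x z = f x + (1 - p) * walkLaplacian G f x := by
  have hball : ∑ z, f z * ballIndicator G x z =
      deg G x * walkLaplacian G f x + (deg G x + 1) * f x := by
    rw [walkLaplacian_eq_sum_ballIndicator, mul_div_cancel₀ _ (by positivity), ← sum_ballIndicator,
      sum_mul, ← sum_add_distrib]
    exact sum_congr rfl fun z _ => by ring
  rw [mu_eq_single_add_ballIndicator]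
  simp only [Pi.add_apply, Pi.smul_apply, smul_eq_mul, mul_add, sum_add_distrib,
    mul_left_comm (f _), ← mul_sum, hball]
  rw [Fintype.sum_eq_single x fun z hz => by simp [hz], Pi.single_eq_same]
  field_simp
  ring

theorem mu_le_one {p : ℝ} (hp₀ : 0 ≤ p) (hp₁ : p ≤ 1) (z : V) : mu G p x z ≤ 1 := by
  unfold mu
  split_ifs with _ hadj
  · exact hp₁
  · have hdeg : (1 : ℝ) ≤ deg G x := mod_cast deg_pos_of_adj hadj
    linarith [div_le_self (sub_nonneg.2 hp₁) hdeg]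
  · exact zero_le_one

theorem eventually_step_mass_le (d : ℕ) :
    ∀ᶠ p : ℝ in nhdsWithin 1 (Set.Iio 1), 0 ≤ (1 - p) / d ∧ 0 ≤ p - (1 - p) / d := by
  filter_upwards [Ioo_mem_nhdsLT (one_half_lt_one (α := ℝ))] with p hp
  have hp₁ : 0 ≤ 1 - p := sub_nonneg.2 hp.2.le
  refine ⟨by positivity, ?_⟩
  rcases d.eq_zero_or_pos with rfl | hd
  · simp only [Nat.cast_zero, div_zero]
    linarith [hp.1]
  · linarith [div_le_self hp₁ (Nat.one_le_cast.2 hd), hp.1]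

theorem kappaLLY_comm (x y : V) : kappaLLY G x y = kappaLLY G y x := by
  simp only [kappaLLY, kappa, W1_comm (mu G _ x)]

theorem kappaLLY_eq_walkLaplacian_sub (hadj : G.Adj x y) (hf : ∀ u v, f v - f u ≤ G.dist u v)
    (hfxy : f y - f x = 1)
    (hcal : ∀ᶠ p : ℝ in nhdsWithin 1 (Set.Iio 1), Calibrates G f (mu G p x) (mu G p y)) :
    kappaLLY G x y = walkLaplacian G f x - walkLaplacian G f y := by
  refine (Filter.Tendsto.congr' ?_ tendsto_const_nhds).limUnder_eq
  filter_upwards [hcal, Ioo_mem_nhdsLT (zero_lt_one (α := ℝ))] with p hp hp01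
  rw [kappa, hp.W1_eq hf (mu_le_one hp01.1.le hp01.2.le), sum_mul_mu f (deg_pos_of_adj hadj),
    sum_mul_mu f (deg_pos_of_adj hadj.symm), eq_div_iff (sub_ne_zero.2 hp01.2.ne')]
  linear_combination hfxy

theorem kappaLLY_of_ballIndicator_eq (hG : G.Connected) (hadj : G.Adj x y)
    (hball : ballIndicator G x = ballIndicator G y) : kappaLLY G x y = 1 + 1 / deg G x := by
  have hdeg : deg G x = deg G y := by
    have h : (deg G x : ℝ) + 1 = deg G y + 1 := by simp only [← sum_ballIndicator, hball]
    exact_mod_cast add_right_cancel h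
  set f : V → ℝ := Pi.single y 1 with hf
  have hfxy : f y - f x = 1 := by simp [hf, hadj.ne]
  have hLip : ∀ u v, f v - f u ≤ G.dist u v := sub_le_dist_of_adj hG fun u v _ => by
    simp only [hf, Pi.single_apply]
    split_ifs <;> norm_num
  have hcal : ∀ᶠ p : ℝ in nhdsWithin 1 (Set.Iio 1), Calibrates G f (mu G p x) (mu G p y) := by
    filter_upwards [eventually_step_mass_le (deg G y)] with p ⟨hstep, hrest⟩
    rw [mu_eq_single_add_ballIndicator, mu_eq_single_add_ballIndicator, hball, hdeg]
    refine (Calibrates.single hrest ?_).add (.refl (smul_nonneg hstep (ballIndicator_nonneg G y)))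
    rw [hfxy, SimpleGraph.dist_eq_one_iff_adj.2 hadj, Nat.cast_one]
  rw [kappaLLY_eq_walkLaplacian_sub hadj hLip hfxy hcal, walkLaplacian_single_of_adj hadj,
    walkLaplacian_single_self (deg_pos_of_adj hadj.symm)]
  ring

end Curvature

namespace antitree

variable {N : ℕ} {a : Fin N → ℕ}

/-- The height of a vertex, a 1-Lipschitz function: the vertices of `V_k` have level `k`
(0-indexed). -/
def level (x : Σ k : Fin N, Fin (a k)) : ℝ := (x.1 : ℕ)

/-- The indicator function of the set `V_k`, used as an unnormalised uniform measure. -/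
def layer (k : Fin N) : (Σ k : Fin N, Fin (a k)) → ℝ := fun z => if z.1 = k then 1 else 0

/-- The indices `k` and `l` are equal or consecutive, i.e. distinct vertices of `V_k ∪ V_l` are
adjacent. -/
def Near (k l : Fin N) : Prop :=
  (k : ℕ) = l ∨ (k : ℕ) + 1 = l ∨ (l : ℕ) + 1 = k

theorem layer_nonneg (k : Fin N) : 0 ≤ layer (a := a) k := fun z => by
  unfold layer
  split_ifs <;> simp

theorem sum_layer_mul (k : Fin N) (g : Fin N → ℝ) :
    ∑ z, layer (a := a) k z * g z.1 = a k * g k := by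
  simp [layer, Fintype.sum_sigma]

theorem layer_eq_single {x : Σ k : Fin N, Fin (a k)} (hx : a x.1 = 1) :
    layer x.1 = Pi.single x 1 := by
  obtain ⟨k, i⟩ := x
  ext ⟨l, j⟩
  by_cases hl : l = k
  · subst hl
    have : Subsingleton (Fin (a l)) := Fin.subsingleton_iff_le_one.2 hx.le
    simp [layer, Subsingleton.elim j i]
  · have hne : (⟨l, j⟩ : Σ k : Fin N, Fin (a k)) ≠ ⟨k, i⟩ := fun h => hl (congrArg Sigma.fst h)
    simp [layer, hl, hne]

theorem ballIndicator_eq_sum_layer (x : Σ k : Fin N, Fin (a k)) :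
    ballIndicator (antitree N a) x = ∑ l with Near x.1 l, layer l := by
  ext z
  have hball : z = x ∨ (antitree N a).Adj x z ↔ Near x.1 z.1 := by
    by_cases hz : z = x
    · simp [hz, Near]
    · simp [hz, Ne.symm hz, antitree, Near]
  simp [ballIndicator, hball, layer, Finset.sum_apply]

theorem ballIndicator_congr {x y : Σ k : Fin N, Fin (a k)} (h : x.1 = y.1) :
    ballIndicator (antitree N a) x = ballIndicator (antitree N a) y := by
  rw [ballIndicator_eq_sum_layer, ballIndicator_eq_sum_layer, h]

theorem sum_ballIndicator_mul_comp_fst (x : Σ k : Fin N, Fin (a k)) (g : Fin N → ℝ) :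
    ∑ z, ballIndicator (antitree N a) x z * g z.1 = ∑ l with Near x.1 l, a l * g l := by
  simp only [ballIndicator_eq_sum_layer, Finset.sum_apply, sum_mul]
  rw [sum_comm]
  simp only [sum_layer_mul]

theorem deg_add_one (x : Σ k : Fin N, Fin (a k)) :
    deg (antitree N a) x + 1 = ∑ l with Near x.1 l, a l := by
  have h := sum_ballIndicator_mul_comp_fst x 1
  simp only [Pi.one_apply, mul_one, sum_ballIndicator] at h
  exact_mod_cast h

theorem walkLaplacian_level (x : Σ k : Fin N, Fin (a k)) :
    walkLaplacian (antitree N a) level x =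
      (∑ l with Near x.1 l, a l * (((l : ℕ) : ℝ) - (x.1 : ℕ))) / deg (antitree N a) x := by
  rw [walkLaplacian_eq_sum_ballIndicator, ← sum_ballIndicator_mul_comp_fst x]
  rfl

theorem adj_of_succ_eq {x y : Σ k : Fin N, Fin (a k)} (h : (x.1 : ℕ) + 1 = y.1) :
    (antitree N a).Adj x y :=
  ⟨fun hxy => by simp [hxy] at h, .inr (.inl h)⟩

theorem adj_of_fst_eq {x y : Σ k : Fin N, Fin (a k)} (hne : x ≠ y) (h : x.1 = y.1) :
    (antitree N a).Adj x y :=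
  ⟨hne, .inl (congrArg Fin.val h)⟩

theorem exists_walk_of_fst_lt (ha : ∀ k, 0 < a k) {x y : Σ k : Fin N, Fin (a k)}
    (h : x.1 < y.1) : ∃ w : (antitree N a).Walk x y, (x.1 : ℕ) + w.length = y.1 := by
  obtain ⟨n, hn⟩ : ∃ n, (y.1 : ℕ) = x.1 + n + 1 := Nat.exists_eq_add_of_lt h
  clear h
  induction n generalizing x with
  | zero => exact ⟨(adj_of_succ_eq hn.symm).toWalk, by simpa using hn.symm⟩
  | succ n ih =>
    let z : Σ k : Fin N, Fin (a k) := ⟨⟨x.1 + 1, by omega⟩, ⟨0, ha _⟩⟩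
    have hxz : (x.1 : ℕ) + 1 = z.1 := rfl
    obtain ⟨w, hw⟩ := ih (x := z) (by omega)
    exact ⟨.cons (adj_of_succ_eq hxz) w, by rw [SimpleGraph.Walk.length_cons]; omega⟩

theorem connected [NeZero N] (ha : ∀ k, 0 < a k) : (antitree N a).Connected := by
  have : Nonempty (Σ k : Fin N, Fin (a k)) := ⟨⟨0, ⟨0, ha 0⟩⟩⟩
  refine ⟨fun x y => ?_⟩
  rcases lt_trichotomy x.1 y.1 with hlt | heq | hgt
  · exact (exists_walk_of_fst_lt ha hlt).choose.reachable
  · by_cases hxy : x = y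
    · exact hxy ▸ .rfl
    · exact (adj_of_fst_eq hxy heq).reachable
  · exact (exists_walk_of_fst_lt ha hgt).choose.reachable.symm

theorem level_sub_le_dist [NeZero N] (ha : ∀ k, 0 < a k) (x y : Σ k : Fin N, Fin (a k)) :
    level y - level x ≤ (antitree N a).dist x y := by
  refine sub_le_dist_of_adj (connected ha) (fun u v huv => ?_) x y
  rw [level, level, sub_le_iff_le_add']
  norm_cast
  rcases huv.2 with h | h | h <;> omega

theorem level_sub_eq_dist [NeZero N] (ha : ∀ k, 0 < a k) {x y : Σ k : Fin N, Fin (a k)}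
    (h : x.1 < y.1) : level y - level x = (antitree N a).dist x y := by
  obtain ⟨w, hw⟩ := exists_walk_of_fst_lt ha h
  refine (level_sub_le_dist ha x y).antisymm ?_
  rw [level, level, le_sub_iff_add_le', ← hw]
  exact_mod_cast Nat.add_le_add_left (SimpleGraph.dist_le w) _

theorem diam_eq (ha : ∀ k, 0 < a k) (hN : 2 ≤ N) : diam (antitree N a) = N - 1 := by
  have : NeZero N := ⟨by omega⟩
  have dist_of_lt : ∀ {x y : Σ k : Fin N, Fin (a k)}, x.1 < y.1 →
      (x.1 : ℕ) + (antitree N a).dist x y = y.1 := fun h => by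
    have := level_sub_eq_dist ha h
    rw [level, level, sub_eq_iff_eq_add'] at this
    exact_mod_cast this.symm
  refine le_antisymm (Finset.sup_le fun ⟨x, y⟩ _ => ?_) ?_
  · change (antitree N a).dist x y ≤ N - 1
    rcases lt_trichotomy x.1 y.1 with hlt | heq | hgt
    · have := dist_of_lt hlt
      omega
    · by_cases hxy : x = y
      · simp [hxy]
      · rw [SimpleGraph.dist_eq_one_iff_adj.2 (adj_of_fst_eq hxy heq)]
        omega
    · rw [SimpleGraph.dist_comm]
      have := dist_of_lt hgt
      omega
  · let bottom : Σ k : Fin N, Fin (a k) := ⟨⟨0, by omega⟩, ⟨0, ha _⟩⟩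
    let top : Σ k : Fin N, Fin (a k) := ⟨⟨N - 1, by omega⟩, ⟨0, ha _⟩⟩
    have hdist : 0 + (antitree N a).dist bottom top = N - 1 :=
      dist_of_lt (x := bottom) (y := top) (Fin.mk_lt_mk.2 (by omega))
    rw [← hdist, zero_add]
    exact le_sup (f := fun xy : _ × _ => (antitree N a).dist xy.1 xy.2) (mem_univ (bottom, top))

theorem calibrates_layer [NeZero N] (ha : ∀ k, 0 < a k) {k l : Fin N} (hkl : k < l)
    (hcard : a k = a l) {c : ℝ} (hc : 0 ≤ c) :
    Calibrates (antitree N a) level (c • layer k) (c • layer l) := by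
  have mass : ∀ j, ∑ z, (c • layer (a := a) j) z = c * a j := fun j => by
    simpa [mul_sum] using congrArg (c * ·) (sum_layer_mul (a := a) j 1)
  have mem_of_ne_zero : ∀ {j z}, (c • layer (a := a) j) z ≠ 0 → z.1 = j := fun {j z} hz =>
    by_contra fun h => hz (by simp [layer, h])
  refine .of_support (smul_nonneg hc (layer_nonneg k)) (smul_nonneg hc (layer_nonneg l))
    (by rw [mass, mass, hcard]) fun x y hx hy => level_sub_eq_dist ha ?_
  rwa [mem_of_ne_zero hx, mem_of_ne_zero hy]

theorem kappaLLY_of_fst_eq [NeZero N] (ha : ∀ k, 0 < a k) {x y : Σ k : Fin N, Fin (a k)}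
    (hne : x ≠ y) (h : x.1 = y.1) :
    kappaLLY (antitree N a) x y = 1 + 1 / deg (antitree N a) x :=
  kappaLLY_of_ballIndicator_eq (connected ha) (adj_of_fst_eq hne h) (ballIndicator_congr h)

theorem kappaLLY_of_mu_eq_add_layer [NeZero N] (ha : ∀ k, 0 < a k)
    {x y : Σ k : Fin N, Fin (a k)} (hxy : (x.1 : ℕ) + 1 = y.1) {k l : Fin N} (hkl : k < l)
    (hcard : a k = a l) {ν : (Σ k : Fin N, Fin (a k)) → ℝ} (hν : 0 ≤ ν) {d : ℕ}
    (hx : ∀ p : ℝ, mu (antitree N a) p x =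
      Pi.single x (p - (1 - p) / d) + ((1 - p) / d) • (layer k + ν))
    (hy : ∀ p : ℝ, mu (antitree N a) p y =
      Pi.single y (p - (1 - p) / d) + ((1 - p) / d) • (layer l + ν)) :
    kappaLLY (antitree N a) x y =
      walkLaplacian (antitree N a) level x - walkLaplacian (antitree N a) level y := by
  have hstep_up : level y - level x = 1 := by
    rw [level, level, ← hxy]
    push_cast
    ring
  refine kappaLLY_eq_walkLaplacian_sub (adj_of_succ_eq hxy) (level_sub_le_dist ha) hstep_up ?_
  filter_upwards [eventually_step_mass_le d] with p ⟨hstep, hrest⟩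
  have hlt : x.1 < y.1 := Fin.lt_def.2 (by omega)
  rw [hx, hy, smul_add, smul_add]
  exact (Calibrates.single hrest (level_sub_eq_dist ha hlt)).add
    ((calibrates_layer ha hkl hcard hstep).add (.refl (smul_nonneg hstep hν)))

theorem sum_near_zero {M : Type*} [AddCommMonoid M] (F : Fin 4 → M) :
    ∑ l with Near 0 l, F l = F 0 + F 1 := by
  simp [sum_filter, Fin.sum_univ_four, Near]

theorem sum_near_one {M : Type*} [AddCommMonoid M] (F : Fin 4 → M) :
    ∑ l with Near 1 l, F l = F 0 + F 1 + F 2 := by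
  simp [sum_filter, Fin.sum_univ_four, Near]

theorem sum_near_two {M : Type*} [AddCommMonoid M] (F : Fin 4 → M) :
    ∑ l with Near 2 l, F l = F 1 + F 2 + F 3 := by
  simp [sum_filter, Fin.sum_univ_four, Near]

theorem sum_near_three {M : Type*} [AddCommMonoid M] (F : Fin 4 → M) :
    ∑ l with Near 3 l, F l = F 2 + F 3 := by
  simp [sum_filter, Fin.sum_univ_four, Near]

section OneBBOne

variable {b : ℕ} {x y : Σ k : Fin 4, Fin (![1, b, b, 1] k)}

theorem oneBBOne_pos (hb : 0 < b) (k : Fin 4) : 0 < ![1, b, b, 1] k := by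
  fin_cases k <;> simp [hb]

theorem deg_outer (hx : x.1 = 0 ∨ x.1 = 3) : deg (antitree 4 ![1, b, b, 1]) x = b := by
  refine add_right_cancel (b := 1) ?_
  rcases hx with hx | hx
  · rw [deg_add_one, hx, sum_near_zero]
    exact add_comm 1 b
  · rw [deg_add_one, hx, sum_near_three]
    rfl

theorem deg_inner (hx : x.1 = 1 ∨ x.1 = 2) : deg (antitree 4 ![1, b, b, 1]) x = 2 * b := by
  refine add_right_cancel (b := 1) ?_
  rcases hx with hx | hx
  · rw [deg_add_one, hx, sum_near_one]
    change 1 + b + b = 2 * b + 1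
    ring
  · rw [deg_add_one, hx, sum_near_two]
    change b + b + 1 = 2 * b + 1
    ring

theorem walkLaplacian_level_bottom (hb : 0 < b) (hx : x.1 = 0) :
    walkLaplacian (antitree 4 ![1, b, b, 1]) level x = 1 := by
  rw [walkLaplacian_level, deg_outer (.inl hx), hx, sum_near_zero]
  simp [hb.ne']

theorem walkLaplacian_level_lower (hx : x.1 = 1) :
    walkLaplacian (antitree 4 ![1, b, b, 1]) level x = (b - 1) / (2 * b) := by
  rw [walkLaplacian_level, deg_inner (.inl hx), hx, sum_near_one]
  norm_num [show ![1, b, b, 1] (2 : Fin 4) = b from rfl, neg_add_eq_sub]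

theorem walkLaplacian_level_upper (hx : x.1 = 2) :
    walkLaplacian (antitree 4 ![1, b, b, 1]) level x = (1 - b) / (2 * b) := by
  rw [walkLaplacian_level, deg_inner (.inr hx), hx, sum_near_two]
  norm_num [show ![1, b, b, 1] (3 : Fin 4) = 1 from rfl, neg_add_eq_sub]

theorem walkLaplacian_level_top (hb : 0 < b) (hx : x.1 = 3) :
    walkLaplacian (antitree 4 ![1, b, b, 1]) level x = -1 := by
  rw [walkLaplacian_level, deg_outer (.inr hx), hx, sum_near_three]
  norm_num [show ![1, b, b, 1] (2 : Fin 4) = b from rfl, hb.ne', neg_div]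

theorem ballIndicator_bottom (hx : x.1 = 0) :
    ballIndicator (antitree 4 ![1, b, b, 1]) x = layer 0 + layer 1 := by
  rw [ballIndicator_eq_sum_layer, hx, sum_near_zero]

theorem ballIndicator_lower (hx : x.1 = 1) :
    ballIndicator (antitree 4 ![1, b, b, 1]) x = layer 0 + layer 1 + layer 2 := by
  rw [ballIndicator_eq_sum_layer, hx, sum_near_one]

theorem ballIndicator_upper (hx : x.1 = 2) :
    ballIndicator (antitree 4 ![1, b, b, 1]) x = layer 1 + layer 2 + layer 3 := by
  rw [ballIndicator_eq_sum_layer, hx, sum_near_two]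

theorem ballIndicator_top (hx : x.1 = 3) :
    ballIndicator (antitree 4 ![1, b, b, 1]) x = layer 2 + layer 3 := by
  rw [ballIndicator_eq_sum_layer, hx, sum_near_three]

theorem mu_inner (hx : x.1 = 1 ∨ x.1 = 2) (p : ℝ) :
    mu (antitree 4 ![1, b, b, 1]) p x = Pi.single x (p - (1 - p) / (2 * b : ℕ)) +
      ((1 - p) / (2 * b : ℕ)) • ballIndicator (antitree 4 ![1, b, b, 1]) x := by
  rw [mu_eq_single_add_ballIndicator, deg_inner hx]

theorem mu_outer {l : Fin 4} (hx : x.1 = 0 ∨ x.1 = 3)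
    (hball : ballIndicator (antitree 4 ![1, b, b, 1]) x = layer x.1 + layer l) (p : ℝ) :
    mu (antitree 4 ![1, b, b, 1]) p x = Pi.single x (p - (1 - p) / (2 * b : ℕ)) +
      ((1 - p) / (2 * b : ℕ)) • (layer l + ballIndicator (antitree 4 ![1, b, b, 1]) x) := by
  have hcard : ![1, b, b, 1] x.1 = 1 := by rcases hx with hx | hx <;> simp [hx]
  have hdouble : (1 - p) / b = 2 * ((1 - p) / (2 * b : ℕ)) := by
    push_cast
    ring
  rw [mu_eq_single_add_ballIndicator, deg_outer hx, hball, layer_eq_single hcard, hdouble]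
  generalize (1 - p) / ((2 * b : ℕ) : ℝ) = c
  have hx_single : (Pi.single x (p - c) : _ → ℝ) = Pi.single x (p - 2 * c) + c • Pi.single x 1 := by
    rw [← Pi.single_smul', ← Pi.single_add]
    congr 1
    rw [smul_eq_mul]
    ring
  rw [hx_single]
  module

theorem kappaLLY_bottom (hb : 0 < b) (hx : x.1 = 0) (hy : y.1 = 1) :
    kappaLLY (antitree 4 ![1, b, b, 1]) x y = (b + 1) / (2 * b) := by
  rw [kappaLLY_of_mu_eq_add_layer (k := 1) (l := 2) (oneBBOne_pos hb) (by simp [hx, hy])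
    (by decide) rfl (ballIndicator_nonneg _ x)
    (mu_outer (.inl hx) (by rw [ballIndicator_bottom hx, hx])),
    walkLaplacian_level_bottom hb hx, walkLaplacian_level_lower hy]
  · field_simp
    ring
  · intro p
    rw [mu_inner (.inl hy), ballIndicator_lower hy, ballIndicator_bottom hx, add_comm (layer 2)]

theorem kappaLLY_middle (hb : 0 < b) (hx : x.1 = 1) (hy : y.1 = 2) :
    kappaLLY (antitree 4 ![1, b, b, 1]) x y = (b - 1) / b := by
  rw [kappaLLY_of_mu_eq_add_layer (k := 0) (l := 3) (oneBBOne_pos hb) (by simp [hx, hy])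
    (by decide) rfl (add_nonneg (layer_nonneg 1) (layer_nonneg 2)),
    walkLaplacian_level_lower hx, walkLaplacian_level_upper hy]
  · field_simp
    ring
  · intro p
    rw [mu_inner (.inl hx), ballIndicator_lower hx, add_assoc]
  · intro p
    rw [mu_inner (.inr hy), ballIndicator_upper hy, add_comm (layer 3)]

theorem kappaLLY_top (hb : 0 < b) (hx : x.1 = 2) (hy : y.1 = 3) :
    kappaLLY (antitree 4 ![1, b, b, 1]) x y = (b + 1) / (2 * b) := by
  rw [kappaLLY_of_mu_eq_add_layer (k := 1) (l := 2) (oneBBOne_pos hb) (by simp [hx, hy])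
    (by decide) rfl (ballIndicator_nonneg _ y) ?_
    (mu_outer (.inr hy) (by rw [ballIndicator_top hy, hy, add_comm])),
    walkLaplacian_level_upper hx, walkLaplacian_level_top hb hy]
  · field_simp
    ring
  · intro p
    rw [mu_inner (.inr hx), ballIndicator_upper hx, ballIndicator_top hy, add_assoc]

theorem le_kappaLLY_of_adj (hb : 0 < b) (hadj : (antitree 4 ![1, b, b, 1]).Adj x y) :
    min (((b : ℝ) + 1) / (2 * b)) ((b - 1) / b) ≤ kappaLLY (antitree 4 ![1, b, b, 1]) x y := by
  have upward : ∀ {u v : Σ k : Fin 4, Fin (![1, b, b, 1] k)}, (u.1 : ℕ) + 1 = v.1 →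
      min (((b : ℝ) + 1) / (2 * b)) ((b - 1) / b) ≤ kappaLLY (antitree 4 ![1, b, b, 1]) u v := by
    intro u v huv
    obtain ⟨hu, hv⟩ | ⟨hu, hv⟩ | ⟨hu, hv⟩ :
        u.1 = 0 ∧ v.1 = 1 ∨ u.1 = 1 ∧ v.1 = 2 ∨ u.1 = 2 ∧ v.1 = 3 := by omega
    · exact (min_le_left _ _).trans_eq (kappaLLY_bottom hb hu hv).symm
    · exact (min_le_right _ _).trans_eq (kappaLLY_middle hb hu hv).symm
    · exact (min_le_left _ _).trans_eq (kappaLLY_top hb hu hv).symm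
  rcases hadj.2 with heq | hup | hdown
  · rw [kappaLLY_of_fst_eq (oneBBOne_pos hb) hadj.1 (Fin.ext heq)]
    calc min (((b : ℝ) + 1) / (2 * b)) ((b - 1) / b) ≤ (b - 1) / b := min_le_right _ _
      _ ≤ 1 := div_le_one_of_le₀ (sub_le_self _ zero_le_one) b.cast_nonneg
      _ ≤ 1 + 1 / deg (antitree 4 ![1, b, b, 1]) x := le_add_of_nonneg_right (by positivity)
  · exact upward hup
  · rw [kappaLLY_comm]
    exact upward hdown

theorem isLeast_kappaLLY (hb : 0 < b) :
    IsLeast {r : ℝ | ∃ x y, (antitree 4 ![1, b, b, 1]).Adj x y ∧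
        r = kappaLLY (antitree 4 ![1, b, b, 1]) x y}
      (min (((b : ℝ) + 1) / (2 * b)) ((b - 1) / b)) := by
  refine ⟨?_, fun r ⟨x, y, hadj, hr⟩ => hr ▸ le_kappaLLY_of_adj hb hadj⟩
  let vertex (k : Fin 4) : Σ k : Fin 4, Fin (![1, b, b, 1] k) := ⟨k, ⟨0, oneBBOne_pos hb k⟩⟩
  rcases min_choice (((b : ℝ) + 1) / (2 * b)) ((b - 1) / b) with h | h <;> rw [h]
  · exact ⟨vertex 0, vertex 1, adj_of_succ_eq rfl, (kappaLLY_bottom hb rfl rfl).symm⟩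
  · exact ⟨vertex 1, vertex 2, adj_of_succ_eq rfl, (kappaLLY_middle hb rfl rfl).symm⟩

end OneBBOne

end antitree

theorem min_curvature_eq_two_thirds_iff {b : ℝ} (hb : 0 < b) :
    min ((b + 1) / (2 * b)) ((b - 1) / b) = 2 / 3 ↔ b = 3 := by
  constructor
  · intro h
    have hle : 2 / 3 ≤ (b + 1) / (2 * b) := h ▸ min_le_left _ _
    have hge : 2 / 3 ≤ (b - 1) / b := h ▸ min_le_right _ _
    rw [div_le_div_iff₀ (by positivity) (by positivity)] at hle hge
    linarith
  · rintro rfl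
    norm_num

/-- The symmetrical antitree `AT(1,b,b,1)` of diameter 3 is Bonnet-Myers sharp
iff `b = 3`; i.e. `AT(1,3,3,1)` is the only Bonnet-Myers sharp symmetrical antitree with
`a_1 = 1` of diameter 3. -/
theorem stmt16 (b : ℕ) (hb : 0 < b) :
    BMSharp (antitree 4 ![1, b, b, 1]) ↔ b = 3 := by
  have hdiam : diam (antitree 4 ![1, b, b, 1]) = 3 :=
    antitree.diam_eq (antitree.oneBBOne_pos hb) (by norm_num)
  rw [BMSharp, (antitree.isLeast_kappaLLY hb).csInf_eq, hdiam, Nat.cast_ofNat,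
    min_curvature_eq_two_thirds_iff (Nat.cast_pos.2 hb)]
  norm_cast
end
end

section
/- Let a≥2 and b≥1 be integers, let G=G(a,b), and let p=1/(2a+b−1). Then W₁(μ_{u_1}^p, μ_{u_3}^p) = 1/(2a+b−1), where u_1 and u_3 are adjacent vertices of G of equal degree 2a+b−2. -/
open scoped Classical
open Finset

noncomputable section

/-!
If `x'` is the only non-neighbour of `x` in a graph on `n` vertices, then the walk at `x` with
idleness `1 / (n - 1)` is the uniform measure on the complement of `x'`. For two such vertices `x`
and `y` the walks therefore differ only in that the first charges `y'` where the second charges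
`x'`, and moving that mass directly is optimal, because the potential `dist · x'` certifies the
matching lower bound `dist y' x' / (n - 1)`. In `G(a,b)` the vertices `y'` and `x'` are adjacent.
-/

section Transport

variable {V : Type*} [Fintype V] {G : SimpleGraph V} {μ μ₁ μ₂ : V → ℝ} {π : V → V → ℝ}

/-- A transport plan from `μ₁` to `μ₂`: a coupling with these marginals, as in the definition
of `W1`. -/
def IsTransportPlan (π : V → V → ℝ) (μ₁ μ₂ : V → ℝ) : Prop :=
  (∀ x y, 0 ≤ π x y ∧ π x y ≤ 1) ∧ (∀ x, ∑ y, π x y = μ₁ x) ∧ (∀ y, ∑ x, π x y = μ₂ y)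

/-- The cost of a transport plan for the combinatorial distance of `G`, the quantity minimised
by `W1`. -/
def transportCost (G : SimpleGraph V) (π : V → V → ℝ) : ℝ :=
  ∑ x, ∑ y, (G.dist x y : ℝ) * π x y

lemma IsTransportPlan.of_nonneg (hπ : ∀ x y, 0 ≤ π x y) (h₁ : ∀ x, ∑ y, π x y = μ₁ x)
    (h₂ : ∀ y, ∑ x, π x y = μ₂ y) (hμ₁ : ∀ x, μ₁ x ≤ 1) : IsTransportPlan π μ₁ μ₂ := by
  refine ⟨fun x y => ⟨hπ x y, ?_⟩, h₁, h₂⟩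
  calc π x y ≤ ∑ z, π x z := single_le_sum (fun z _ => hπ x z) (mem_univ y)
    _ = μ₁ x := h₁ x
    _ ≤ 1 := hμ₁ x

/-- Weak Kantorovich duality. -/
lemma IsTransportPlan.sum_mul_sub_sum_mul_le_transportCost (hπ : IsTransportPlan π μ₁ μ₂)
    {f : V → ℝ} (hf : ∀ x y, f x - f y ≤ G.dist x y) :
    ∑ x, f x * μ₁ x - ∑ y, f y * μ₂ y ≤ transportCost G π := by
  obtain ⟨hnonneg, h₁, h₂⟩ := hπ
  calc ∑ x, f x * μ₁ x - ∑ y, f y * μ₂ y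
      = ∑ x, ∑ y, f x * π x y - ∑ y, ∑ x, f y * π x y := by
        simp only [← h₁, ← h₂, mul_sum]
    _ = ∑ x, ∑ y, (f x - f y) * π x y := by
        rw [sum_comm (f := fun y x => f y * π x y)]
        simp only [sub_mul, sum_sub_distrib]
    _ ≤ transportCost G π := sum_le_sum fun x _ => sum_le_sum fun y _ =>
        mul_le_mul_of_nonneg_right (hf x y) (hnonneg x y).1

lemma W1_eq_transportCost_of_potential (hπ : IsTransportPlan π μ₁ μ₂)
    {f : V → ℝ} (hf : ∀ x y, f x - f y ≤ G.dist x y)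
    (hopt : transportCost G π = ∑ x, f x * μ₁ x - ∑ y, f y * μ₂ y) :
    W1 G μ₁ μ₂ = transportCost G π := by
  refine IsLeast.csInf_eq ⟨⟨π, hπ.1, hπ.2.1, hπ.2.2, rfl⟩, ?_⟩
  rintro _ ⟨ρ, hρ, hρ₁, hρ₂, rfl⟩
  rw [hopt]
  exact IsTransportPlan.sum_mul_sub_sum_mul_le_transportCost ⟨hρ, hρ₁, hρ₂⟩ hf

/-- The plan that leaves `μ` in place and moves an additional mass `q` from `s` to `t`. -/
def shiftPlan (μ : V → ℝ) (q : ℝ) (s t x y : V) : ℝ :=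
  (if x = y then μ x else 0) + if x = s ∧ y = t then q else 0

lemma isTransportPlan_shiftPlan {q : ℝ} {s t : V} (hμ : 0 ≤ μ) (hq : 0 ≤ q)
    (hle : μ + Pi.single s q ≤ 1) :
    IsTransportPlan (shiftPlan μ q s t) (μ + Pi.single s q) (μ + Pi.single t q) := by
  refine .of_nonneg (fun x y => ?_) (fun x => ?_) (fun y => ?_) hle
  · refine add_nonneg ?_ ?_ <;> split_ifs
    exacts [hμ x, le_rfl, hq, le_rfl]
  · simp [shiftPlan, sum_add_distrib, ite_and, Pi.single_apply]
  · simp [shiftPlan, sum_add_distrib, ite_and, Pi.single_apply]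

lemma transportCost_shiftPlan (G : SimpleGraph V) (μ : V → ℝ) (q : ℝ) (s t : V) :
    transportCost G (shiftPlan μ q s t) = q * G.dist s t := by
  simp [transportCost, shiftPlan, mul_add, sum_add_distrib, ite_and, mul_comm q]

theorem W1_add_single_add_single (hG : G.Connected) {q : ℝ} {s t : V} (hμ : 0 ≤ μ) (hq : 0 ≤ q)
    (hle : μ + Pi.single s q ≤ 1) :
    W1 G (μ + Pi.single s q) (μ + Pi.single t q) = q * G.dist s t := by
  have dist_lipschitz (x y : V) : (G.dist x t : ℝ) - G.dist y t ≤ G.dist x y := by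
    rw [sub_le_iff_le_add]
    exact_mod_cast hG.dist_triangle
  rw [← transportCost_shiftPlan G μ q s t]
  refine W1_eq_transportCost_of_potential (isTransportPlan_shiftPlan hμ hq hle) dist_lipschitz ?_
  simp [transportCost_shiftPlan, mul_add, sum_add_distrib, Pi.single_apply, mul_comm q]

theorem W1_const_sub_single (hG : G.Connected) {q : ℝ} (q_nonneg : 0 ≤ q) (q_le_one : q ≤ 1)
    {s t : V} (hst : s ≠ t) :
    W1 G (Function.const V q - Pi.single s q) (Function.const V q - Pi.single t q) =
      q * G.dist t s := by
  set common : V → ℝ := Function.const V q - Pi.single s q - Pi.single t q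
  have common_nonneg : 0 ≤ common := fun z => by
    simp only [common, Pi.zero_apply, Pi.sub_apply, Function.const_apply, Pi.single_apply]
    split_ifs with hzs hzt
    · exact absurd (hzs.symm.trans hzt) hst
    all_goals linarith
  have source_eq : Function.const V q - Pi.single s q = common + Pi.single t q := by
    simp [common]
  have target_eq : Function.const V q - Pi.single t q = common + Pi.single s q := by
    simp only [common]
    abel
  have source_le_one : common + Pi.single t q ≤ 1 := fun z => by
    have single_nonneg : (0 : V → ℝ) ≤ Pi.single s q := Pi.single_nonneg.2 q_nonneg
    rw [← source_eq]
    exact (sub_le_self q (single_nonneg z)).trans q_le_one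
  rw [source_eq, target_eq]
  exact W1_add_single_add_single hG common_nonneg q_nonneg source_le_one

end Transport

section SoleNonneighbor

variable {V : Type*} {G : SimpleGraph V} {x x' y y' : V}

/-- `x'` is the only vertex other than `x` that is not adjacent to `x`; the pairs deleted from
the complete graph to form `Gab` are of this kind. -/
def IsSoleNonneighbor (G : SimpleGraph V) (x x' : V) : Prop :=
  ∀ z, Gᶜ.Adj x z ↔ z = x'

namespace IsSoleNonneighbor

lemma ne (h : IsSoleNonneighbor G x x') : x ≠ x' :=
  ((h x').2 rfl).ne

lemma adj_iff (h : IsSoleNonneighbor G x x') {z : V} : G.Adj x z ↔ z ≠ x ∧ z ≠ x' := by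
  have hz := h z
  rw [SimpleGraph.compl_adj] at hz
  have hloop : G.Adj x z → z ≠ x := fun hadj => hadj.ne'
  tauto

lemma connected (h : IsSoleNonneighbor G x x') (hy : G.Adj y x') : G.Connected := by
  refine G.connected_iff_exists_forall_reachable.2 ⟨x, fun z => ?_⟩
  have reachable_of_ne {w : V} (hw : w ≠ x') : G.Reachable x w := by
    rcases eq_or_ne w x with rfl | hwx
    · exact .rfl
    · exact (h.adj_iff.2 ⟨hwx, hw⟩).reachable
  rcases eq_or_ne z x' with rfl | hz
  · exact (reachable_of_ne hy.ne).trans hy.reachable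
  · exact reachable_of_ne hz

variable [Fintype V]

lemma deg_add_two (h : IsSoleNonneighbor G x x') : deg G x + 2 = Fintype.card V := by
  have neighbors_eq : univ.filter (G.Adj x) = ({x, x'} : Finset V)ᶜ := by
    ext z
    simp [h.adj_iff]
  rw [deg, neighbors_eq, ← card_pair h.ne, card_compl_add_card]

lemma mu_eq_const_sub_single (h : IsSoleNonneighbor G x x') :
    mu G (1 / ((Fintype.card V : ℝ) - 1)) x =
      Function.const V (1 / ((Fintype.card V : ℝ) - 1)) -
        Pi.single x' (1 / ((Fintype.card V : ℝ) - 1)) := by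
  have card_sub_one : (Fintype.card V : ℝ) - 1 = deg G x + 1 := by
    rw [← h.deg_add_two]
    push_cast
    ring
  ext z
  rw [card_sub_one]
  by_cases hzx : z = x
  · simp [mu, hzx, h.ne]
  by_cases hzx' : z = x'
  · simp [mu, hzx', h.ne.symm, h.adj_iff]
  have hadj : G.Adj x z := h.adj_iff.2 ⟨hzx, hzx'⟩
  have deg_ne_zero : (deg G x : ℝ) ≠ 0 :=
    Nat.cast_ne_zero.2 (card_ne_zero_of_mem (mem_filter.2 ⟨mem_univ z, hadj⟩))
  simp only [mu, hzx, hadj, Pi.sub_apply, Function.const_apply, Pi.single_apply, hzx', if_true,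
    if_false, sub_zero]
  field_simp
  ring

theorem W1_mu_mu (hG : G.Connected) (hx : IsSoleNonneighbor G x x')
    (hy : IsSoleNonneighbor G y y') (hne : x' ≠ y') :
    W1 G (mu G (1 / ((Fintype.card V : ℝ) - 1)) x) (mu G (1 / ((Fintype.card V : ℝ) - 1)) y) =
      1 / ((Fintype.card V : ℝ) - 1) * G.dist y' x' := by
  have two_le_card : (2 : ℝ) ≤ Fintype.card V := by
    exact_mod_cast hx.deg_add_two ▸ Nat.le_add_left 2 (deg G x)
  rw [hx.mu_eq_const_sub_single, hy.mu_eq_const_sub_single]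
  refine W1_const_sub_single hG ?_ ?_ hne
  · apply one_div_nonneg.2
    linarith
  · apply div_le_one_of_le₀ <;> linarith

end IsSoleNonneighbor

end SoleNonneighbor

lemma Gab.exists_isSoleNonneighbor {a b : ℕ} {i : Fin (2 * a + b)} (hi : (i : ℕ) < 2 * a) :
    ∃ i' : Fin (2 * a + b), (i' : ℕ) / 2 = i / 2 ∧ IsSoleNonneighbor (Gab a b) i i' := by
  -- The two members of a pair `{2k, 2k + 1}` sum to `4k + 1`.
  refine ⟨⟨4 * (i / 2) + 1 - i, by omega⟩, by dsimp only; omega, fun z => ?_⟩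
  simp only [SimpleGraph.compl_adj, Gab, ne_eq, Fin.ext_iff]
  omega

lemma Gab.adj_of_div_two_ne {a b : ℕ} {i j : Fin (2 * a + b)} (hij : (i : ℕ) / 2 ≠ j / 2) :
    (Gab a b).Adj i j :=
  ⟨fun h => hij (by rw [h]), fun h => hij h.2.2⟩

theorem stmt18_general (a b : ℕ) {i j : Fin (2 * a + b)} (hi : (i : ℕ) < 2 * a)
    (hj : (j : ℕ) < 2 * a) (hij : (i : ℕ) / 2 ≠ j / 2) :
    (Gab a b).Adj i j ∧ deg (Gab a b) i = 2 * a + b - 2 ∧ deg (Gab a b) j = 2 * a + b - 2 ∧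
    W1 (Gab a b) (mu (Gab a b) (1 / ((2 * a + b : ℝ) - 1)) i)
        (mu (Gab a b) (1 / ((2 * a + b : ℝ) - 1)) j) = 1 / ((2 * a + b : ℝ) - 1) := by
  obtain ⟨i', hi'_div, hi'⟩ := Gab.exists_isSoleNonneighbor hi
  obtain ⟨j', hj'_div, hj'⟩ := Gab.exists_isSoleNonneighbor hj
  have deg_eq {x x'} (h : IsSoleNonneighbor (Gab a b) x x') : deg (Gab a b) x = 2 * a + b - 2 :=
    Nat.eq_sub_of_add_eq (h.deg_add_two.trans (Fintype.card_fin _))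
  have adj_j'_i' : (Gab a b).Adj j' i' := Gab.adj_of_div_two_ne (by omega)
  have hW := hi'.W1_mu_mu (hi'.connected adj_j'_i') hj' adj_j'_i'.ne'
  rw [SimpleGraph.dist_eq_one_iff_adj.2 adj_j'_i'] at hW
  exact ⟨Gab.adj_of_div_two_ne hij, deg_eq hi', deg_eq hj', by simpa using hW⟩

/-- In `G(a,b)` with `a ≥ 2`, `b ≥ 1`, the vertices `u_1` and `u_3` are adjacent
of equal degree `2a+b-2`, and for `p = 1/(2a+b-1)` we have `W₁(μ_{u_1}^p, μ_{u_3}^p) =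
1/(2a+b-1)`. -/
theorem stmt18 (a b : ℕ) (ha : 2 ≤ a) (hb : 1 ≤ b) :
    (Gab a b).Adj ⟨0, by omega⟩ ⟨2, by omega⟩ ∧
    deg (Gab a b) ⟨0, by omega⟩ = 2*a + b - 2 ∧
    deg (Gab a b) ⟨2, by omega⟩ = 2*a + b - 2 ∧
    W1 (Gab a b) (mu (Gab a b) (1 / ((2*a+b : ℝ) - 1)) ⟨0, by omega⟩)
        (mu (Gab a b) (1 / ((2*a+b : ℝ) - 1)) ⟨2, by omega⟩)
      = 1 / ((2*a+b : ℝ) - 1) :=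
  stmt18_general a b (show 0 < 2 * a by omega) (show 2 < 2 * a by omega) (by norm_num)
end
end
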